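/- For N = 2n+1 odd and c = (1 2 ... N), the zeta polynomial of the interval [e,c]_3 in (A_N, ≤_3) is Z(q) = [q/(q(2n+1) - n)] · C(q(2n+1) - n, n); i.e., the number of (q-1)-multichains in [e,c]_3 equals this quantity for every positive integer q. -/

import Mathlib

open Equiv Equiv.Perm

/-- The word length of `x` with respect to a generating set `T`. -/
noncomputable def lenT {G : Type*} [Group G] (T : Set G) (x : G) : ℕ :=
  sInf {n | ∃ l : List G, (∀ t ∈ l, t ∈ T) ∧ l.prod = x ∧ l.length = n}

/-- The `T`-prefix order. -/
def leT {G : Type*} [Group G] (T : Set G) (x y : G) : Prop :=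
  lenT T y = lenT T x + lenT T (x⁻¹ * y)

/-- The set of 3-cycles of the symmetric group on `Fin N`. -/
def threeCycles (N : ℕ) : Set (Perm (Fin N)) := {σ | σ.IsThreeCycle}

/-- The set of transpositions of the symmetric group on `Fin N`. -/
def transpositions (N : ℕ) : Set (Perm (Fin N)) := {σ | σ.IsSwap}

/-- The number of odd cycles of a permutation, counting fixed points. -/
def ocyc {N : ℕ} (x : Perm (Fin N)) : ℕ :=
  (x.cycleType.filter (fun n => Odd n)).card + (N - x.cycleType.sum)


section core
variable {α : Type*} [Fintype α] [DecidableEq α]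

/-- functions invariant under `u` -/
def Fx (u : Perm α) : Submodule ℚ (α → ℚ) where
  carrier := {f | ∀ y, f (u y) = f y}
  add_mem' := by intro a b ha hb y; simp [ha y, hb y]
  zero_mem' := by intro y; simp
  smul_mem' := by intro c a ha y; simp [ha y]

theorem mem_Fx {u : Perm α} {f : α → ℚ} : f ∈ Fx u ↔ ∀ y, f (u y) = f y := Iff.rfl

/-- absolute length -/
noncomputable def ell (u : Perm α) : ℕ := Fintype.card α - Module.finrank ℚ (Fx u)

theorem ell_add (u : Perm α) : ell u + Module.finrank ℚ (Fx u) = Fintype.card α := by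
  have := Submodule.finrank_le (Fx u)
  rw [Module.finrank_fintype_fun_eq_card] at this
  unfold ell; omega

theorem Fx_inf_le (u v : Perm α) : Fx u ⊓ Fx v ≤ Fx (u * v) := by
  rintro f ⟨h1, h2⟩ y
  rw [Perm.mul_apply, h1, h2]

theorem ell_mul_le (u v : Perm α) : ell (u * v) ≤ ell u + ell v := by
  have h := Submodule.finrank_sup_add_finrank_inf_eq (Fx u) (Fx v)
  have h1 := Submodule.finrank_mono (Fx_inf_le u v)
  have h2 := Submodule.finrank_le (Fx u ⊔ Fx v)
  rw [Module.finrank_fintype_fun_eq_card] at h2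
  have := ell_add u
  have := ell_add v
  have := ell_add (u * v)
  omega

theorem add_imp {u v : Perm α} (e : ell u + ell v = ell (u * v)) :
    Fx (u * v) = Fx u ⊓ Fx v ∧ Fx u ⊔ Fx v = ⊤ := by
  have h := Submodule.finrank_sup_add_finrank_inf_eq (Fx u) (Fx v)
  have h1 := Submodule.finrank_mono (Fx_inf_le u v)
  have h2 := Submodule.finrank_le (Fx u ⊔ Fx v)
  rw [Module.finrank_fintype_fun_eq_card] at h2
  have := ell_add u
  have := ell_add v
  have := ell_add (u * v)
  constructor
  · exact (Submodule.eq_of_le_of_finrank_eq (Fx_inf_le u v) (by omega)).symm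
  · apply Submodule.eq_top_of_finrank_eq
    rw [Module.finrank_fintype_fun_eq_card]; omega

theorem add_of {u v : Perm α} (h1 : Fx u ⊔ Fx v = ⊤) (h2 : Fx (u * v) ≤ Fx u) :
    ell u + ell v = ell (u * v) := by
  have h3 : Fx (u * v) = Fx u ⊓ Fx v := by
    apply le_antisymm _ (Fx_inf_le u v)
    intro f hf
    refine ⟨h2 hf, fun y => ?_⟩
    rw [← h2 hf (v y), ← hf y]; rfl
  have h := Submodule.finrank_sup_add_finrank_inf_eq (Fx u) (Fx v)
  rw [h1, ← h3, finrank_top, Module.finrank_fintype_fun_eq_card] at h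
  have := ell_add u
  have := ell_add v
  have := ell_add (u * v)
  omega

theorem ell_conj (u v : Perm α) : ell (u * v * u⁻¹) = ell v := by
  have : Module.finrank ℚ (Fx (u * v * u⁻¹)) = Module.finrank ℚ (Fx v) := by
    have e : Fx (u * v * u⁻¹) = (Fx v).map (LinearEquiv.funCongrLeft ℚ ℚ u⁻¹ : (α → ℚ) ≃ₗ[ℚ] (α → ℚ)).toLinearMap := by
      ext f
      rw [Submodule.mem_map]
      constructor
      · intro hf
        refine ⟨fun y => f (u y), fun y => ?_, ?_⟩
        · have := hf (u y)
          simpa using this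
        · ext y; simp [LinearEquiv.funCongrLeft]
      · rintro ⟨g, hg, rfl⟩ y
        simp only [LinearEquiv.funCongrLeft, LinearMap.funLeft_apply, Perm.mul_apply, LinearEquiv.coe_coe, LinearEquiv.coe_mk]
        simp
        exact hg _
    rw [e]
    exact LinearEquiv.finrank_map_eq _ _
  unfold ell; rw [this]

@[simp] theorem ell_one : ell (1 : Perm α) = 0 := by
  have : Fx (1 : Perm α) = ⊤ := by
    ext f; simp [mem_Fx]
  have h := ell_add (1 : Perm α)
  rw [this, finrank_top, Module.finrank_fintype_fun_eq_card] at h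
  omega

theorem eq_one_of_Fx {u : Perm α} (h : Fx u = ⊤) : u = 1 := by
  ext y
  have : (Pi.single y 1 : α → ℚ) ∈ Fx u := by rw [h]; trivial
  have := this y
  by_contra hne
  have hne' : u y ≠ y := hne
  simp [Pi.single_apply, hne'] at this

theorem Fx_disj {u v : Perm α} (h : Disjoint u v) : Fx u ⊔ Fx v = ⊤ := by
  rw [eq_top_iff]
  intro f _
  rw [Submodule.mem_sup]
  refine ⟨fun y => if u y = y then f y else 0, ?_, fun y => if u y = y then 0 else f y, ?_, ?_⟩
  · intro y
    by_cases hy : u y = y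
    · simp [hy]
    · have : u (u y) ≠ u y := fun h => hy (u.injective h)
      simp [hy]
  · intro y
    rcases h y with hy | hy
    · have h2 : u (v y) = v y := by
        rcases h (v y) with h | h
        · exact h
        · rw [v.injective h]; exact hy
      simp [hy, h2]
    · simp [hy]
  · ext y; by_cases hy : u y = y <;> simp [hy]

theorem ell_disj {u v : Perm α} (h : Disjoint u v) : ell (u * v) = ell u + ell v := by
  symm
  apply add_of (Fx_disj h)
  intro f hf y
  rcases h y with hy | hy
  · rw [hy]
  · have := hf y
    rwa [Perm.mul_apply, hy] at this

theorem ell_swap_le (x y : α) : ell (swap x y) ≤ 1 := by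
  by_cases hxy : x = y
  · subst hxy; rw [swap_self]; change ell 1 ≤ 1; simp
  let φ : (α → ℚ) →ₗ[ℚ] ℚ := (LinearMap.proj x : (α → ℚ) →ₗ[ℚ] ℚ) - LinearMap.proj y
  have h1 := LinearMap.finrank_range_add_finrank_ker φ
  have h2 : LinearMap.ker φ ≤ Fx (swap x y) := by
    intro f hf z
    have : f x = f y := by
      have : f x - f y = 0 := hf
      linarith
    rw [swap_apply_def]; split_ifs <;> simp_all
  have h3 := Submodule.finrank_mono h2
  have h4 := Submodule.finrank_le (LinearMap.range φ)
  have := ell_add (swap x y)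
  rw [Module.finrank_fintype_fun_eq_card] at h1
  rw [Module.finrank_self] at h4
  omega

end core

section core2
variable {α : Type*} [Fintype α] [DecidableEq α]

theorem mem_Fx_swap {x y : α} {f : α → ℚ} (h : f x = f y) : f ∈ Fx (swap x y) := by
  intro z
  rw [swap_apply_def]; split_ifs <;> simp_all

theorem ell_swap {x y : α} (h : x ≠ y) : ell (swap x y) = 1 := by
  have h1 := ell_swap_le x y
  by_contra h2
  have h3 : ell (swap x y) = 0 := by omega
  have h4 := ell_add (swap x y)
  have h5 : Fx (swap x y) = ⊤ := by
    apply Submodule.eq_top_of_finrank_eq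
    rw [Module.finrank_fintype_fun_eq_card]; omega
  have := eq_one_of_Fx h5
  rw [swap_eq_one_iff] at this
  exact h this

theorem single_mem_Fx {u : Perm α} {x : α} (h : u x = x) (c : ℚ) : (Pi.single x c : α → ℚ) ∈ Fx u := by
  intro y
  by_cases hy : y = x
  · subst hy; rw [h]
  · have : u y ≠ x := fun h' => hy (u.injective (h'.trans h.symm))
    simp [Pi.single_apply, hy, this]

theorem ell_formPerm : ∀ (l : List α), l.Nodup → ell l.formPerm = l.length - 1
  | [], _ => by simp
  | [x], _ => by simp
  | x :: y :: l, h => by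
    have ih := ell_formPerm (y :: l) h.of_cons
    have hx : x ∉ y :: l := (List.nodup_cons.1 h).1
    have hxy : x ≠ y := fun e => hx (by simp [e])
    have hfx : (y :: l).formPerm x = x := List.formPerm_apply_of_notMem hx
    rw [List.formPerm_cons_cons, ← add_of, ih, ell_swap hxy]
    · simp; omega
    · rw [eq_top_iff]
      intro f _
      rw [Submodule.mem_sup]
      refine ⟨f - Pi.single x (f x - f y), ?_, Pi.single x (f x - f y), single_mem_Fx hfx _, by simp⟩
      apply mem_Fx_swap
      simp [Pi.single_apply, hxy.symm]
    · intro f hf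
      apply mem_Fx_swap
      have := hf x
      rw [Perm.mul_apply, hfx, swap_apply_left] at this
      exact this.symm

/-- the three-cycle `x → a → b → x` -/
def c3 (x a b : α) : Perm α := swap x a * swap a b

theorem c3_x {x a b : α} (h1 : x ≠ a) (h2 : x ≠ b) : c3 x a b x = a := by
  simp [c3, swap_apply_of_ne_of_ne h1 h2]
theorem c3_a {x a b : α} (h2 : x ≠ b) (h3 : a ≠ b) : c3 x a b a = b := by
  simp [c3, swap_apply_of_ne_of_ne h2.symm h3.symm]
theorem c3_b {x a b : α} : c3 x a b b = x := by
  simp [c3]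
theorem c3_o {x a b y : α} (h1 : y ≠ x) (h2 : y ≠ a) (h3 : y ≠ b) : c3 x a b y = y := by
  simp [c3, swap_apply_of_ne_of_ne, *]

theorem c3_form (x a b : α) : c3 x a b = [x, a, b].formPerm := by
  simp [c3]

theorem ell_c3 {x a b : α} (h1 : x ≠ a) (h2 : x ≠ b) (h3 : a ≠ b) : ell (c3 x a b) = 2 := by
  rw [c3_form, ell_formPerm]
  · simp
  · simp [*]

theorem mem_Fx_c3 {x a b : α} {f : α → ℚ} (h : f x = f a) (h' : f a = f b) : f ∈ Fx (c3 x a b) :=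
  Fx_inf_le _ _ ⟨mem_Fx_swap h, mem_Fx_swap h'⟩

/-- all cycles odd -/
def Od (u : Perm α) : Prop := ∀ y, ∃ j : ℕ, (u ^ (2 * j + 1)) y = y

theorem Fx_pow {u : Perm α} {f : α → ℚ} (h : f ∈ Fx u) (j : ℕ) (y : α) : f ((u ^ j) y) = f y := by
  induction j with
  | zero => simp
  | succ j ih => rw [pow_succ', Perm.mul_apply, h, ih]

theorem Fx_sq {u : Perm α} {f : α → ℚ} (h : ∀ y, f (u (u y)) = f y) (j : ℕ) (y : α) :
    f ((u ^ (2 * j)) y) = f y := by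
  rw [pow_mul]
  exact Fx_pow (u := u ^ 2) (fun y => by rw [pow_two]; exact h y) j y

theorem Od_imp {u : Perm α} (h : Od u) {f : α → ℚ} (hf : ∀ y, f (u (u y)) = f y) : f ∈ Fx u := by
  intro y
  obtain ⟨j, hj⟩ := h (u y)
  rw [← hj, pow_succ, Perm.mul_apply, Fx_sq hf, hf]

theorem Od_of {u : Perm α} (h : ∀ f : α → ℚ, (∀ y, f (u (u y)) = f y) → f ∈ Fx u) : Od u := by
  classical
  intro x
  have key := h (fun y => if ∃ j : ℤ, (u ^ (2 * j)) x = y then 1 else 0) (by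
    intro y
    congr 1
    simp only [eq_iff_iff]
    constructor
    · rintro ⟨j, hj⟩
      refine ⟨j - 1, ?_⟩
      rw [show (2 * (j - 1) : ℤ) = (-1) + ((-1) + 2 * j) by ring, zpow_add, zpow_add, Perm.mul_apply, Perm.mul_apply, hj]
      simp
    · rintro ⟨j, hj⟩
      refine ⟨j + 1, ?_⟩
      rw [show (2 * (j + 1) : ℤ) = 1 + (1 + 2 * j) by ring, zpow_add, zpow_add, Perm.mul_apply, Perm.mul_apply, hj]
      simp) x
  simp only at key
  rw [if_pos (⟨0, by simp⟩ : ∃ j : ℤ, (u ^ (2 * j)) x = x)] at key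
  split_ifs at key with h1
  · obtain ⟨j, hj⟩ := h1
    have e : (u ^ (2 * j - 1)) x = x := by
      rw [show (2 * j - 1 : ℤ) = -1 + 2 * j by ring, zpow_add, Perm.mul_apply, hj]; simp
    have e' : (u ^ (-(2 * j - 1))) x = x := by
      rw [zpow_neg, Perm.inv_eq_iff_eq, e]
    rcases le_or_gt 1 j with hj | hj
    · refine ⟨(j - 1).toNat, ?_⟩
      rw [← zpow_natCast, show ((2 * (j - 1).toNat + 1 : ℕ) : ℤ) = 2 * j - 1 by omega]; exact e
    · refine ⟨(-j).toNat, ?_⟩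
      rw [← zpow_natCast, show ((2 * (-j).toNat + 1 : ℕ) : ℤ) = -(2 * j - 1) by omega]; exact e'
  · simp at key

theorem Od_one : Od (1 : Perm α) := fun y => ⟨0, by simp⟩

theorem Od_conj {u v : Perm α} (h : Od v) : Od (u * v * u⁻¹) := by
  intro y
  obtain ⟨j, hj⟩ := h (u⁻¹ y)
  refine ⟨j, ?_⟩
  rw [conj_pow, Perm.mul_apply, Perm.mul_apply, hj]; simp

theorem peel_ell {x a b : α} (h1 : x ≠ a) (h2 : x ≠ b) (h3 : a ≠ b) {u : Perm α} (hx : u x = x) (ha : u a = a) :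
    ell (c3 x a b) + ell u = ell (c3 x a b * u) := by
  apply add_of
  · rw [eq_top_iff]
    intro f _
    rw [Submodule.mem_sup]
    refine ⟨f - (Pi.single x (f x - f b) + Pi.single a (f a - f b)), ?_, _, 
      add_mem (single_mem_Fx hx (f x - f b)) (single_mem_Fx ha (f a - f b)), by simp⟩
    apply mem_Fx_c3 <;> simp [Pi.single_apply, h1, h2, h3, h1.symm, h2.symm, h3.symm]
  · intro f hf
    have e1 := hf x
    have e2 := hf a
    rw [Perm.mul_apply, hx, c3_x h1 h2] at e1
    rw [Perm.mul_apply, ha, c3_a h2 h3] at e2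
    exact mem_Fx_c3 e1.symm e2.symm

theorem peel_rev {x a b : α} (h1 : x ≠ a) (h2 : x ≠ b) (h3 : a ≠ b) {u : Perm α} (hx : u x = x) (ha : u a = a)
    (ho : Od (c3 x a b * u)) : Od u := by
  apply Od_of
  intro f hf
  obtain ⟨g, gx, ga, go⟩ : ∃ g : α → ℚ, g x = f b ∧ g a = f (u b) ∧ ∀ y, y ≠ x → y ≠ a → g y = f y :=
    ⟨fun y => if y = x then f b else if y = a then f (u b) else f y, by simp, by simp [h1.symm],
      fun y hy hy' => by simp [hy, hy']⟩
  have key : g ∈ Fx (c3 x a b * u) := by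
    apply Od_imp ho
    intro y
    have inj : ∀ {p q}, u p = u q → p = q := fun h => u.injective h
    have hux : ∀ y, u y = x → y = x := fun y h => inj (h.trans hx.symm)
    have hua : ∀ y, u y = a → y = a := fun y h => inj (h.trans ha.symm)
    simp only [Perm.mul_apply]
    by_cases hyx : y = x
    · subst hyx
      rw [hx, c3_x h1 h2, ha, c3_a h2 h3, gx, go _ h2.symm h3.symm]
    by_cases hya : y = a
    · subst hya
      rw [ha, c3_a h2 h3]
      by_cases hb : u b = b
      · rw [hb, c3_b, gx, ga, hb]
      · have n1 : u b ≠ x := fun h => h2.symm (hux _ h)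
        have n2 : u b ≠ y := fun h => h3.symm (hua _ h)
        rw [c3_o n1 n2 hb, ga, go _ n1 n2]
    have n1 : u y ≠ x := fun h => hyx (hux _ h)
    have n2 : u y ≠ a := fun h => hya (hua _ h)
    by_cases hyb : u y = b
    · rw [hyb, c3_b, hx, c3_x h1 h2, ga, go _ hyx hya, ← hyb, hf]
    · rw [c3_o n1 n2 hyb]
      have n3 : u (u y) ≠ x := fun h => n1 (hux _ h)
      have n4 : u (u y) ≠ a := fun h => n2 (hua _ h)
      have e := hf y
      by_cases hb2 : u (u y) = b
      · rw [hb2, c3_b, gx, go _ hyx hya, ← e, hb2]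
      · rw [c3_o n3 n4 hb2, go _ n3 n4, go _ hyx hya, e]
  have k2 := ((add_imp (peel_ell h1 h2 h3 hx ha)).1 ▸ key).2
  intro y
  by_cases hyx : y = x
  · subst hyx; rw [hx]
  by_cases hya : y = a
  · subst hya; rw [ha]
  have n1 : u y ≠ x := fun h => hyx (u.injective (h.trans hx.symm))
  have n2 : u y ≠ a := fun h => hya (u.injective (h.trans ha.symm))
  have := k2 y
  rwa [go _ n1 n2, go _ hyx hya] at this

theorem path_aux {v : Perm α} (hv : Od v) {x : α} {τ : Perm α}
    (hτ : ∀ k : ℕ, (v ^ k) x ≠ x → τ ((v ^ k) x) = (v ^ k) x) :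
    ∃ j : ℕ, ((τ * v) ^ (2 * j + 1)) x = τ x := by
  have hfin : ∃ j, 0 < j ∧ (v ^ j) x = x := by
    obtain ⟨j, hj⟩ := hv x
    exact ⟨2 * j + 1, by omega, hj⟩
  classical
  set p := Nat.find hfin with hp
  obtain ⟨hp0, hpx⟩ := Nat.find_spec hfin
  rw [← hp] at hp0 hpx
  have hmin : ∀ i, 0 < i → i < p → (v ^ i) x ≠ x := fun i h0 hi h => Nat.find_min hfin hi ⟨h0, h⟩
  have hodd : Odd p := by
    obtain ⟨j, hj⟩ := hv x
    have hper : ∀ k, (v ^ (p * k)) x = x := by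
      intro k
      induction k with
      | zero => simp
      | succ k ih => rw [Nat.mul_succ, pow_add, Perm.mul_apply, hpx, ih]
    have hd : (2 * j + 1) % p = 0 := by
      by_contra hne
      apply hmin _ (Nat.pos_of_ne_zero hne) (Nat.mod_lt _ hp0)
      have h := hj
      rw [← Nat.mod_add_div (2 * j + 1) p, pow_add, Perm.mul_apply, hper] at h
      exact h
    have : p ∣ 2 * j + 1 := Nat.dvd_of_mod_eq_zero hd
    exact Odd.of_dvd_nat ⟨j, rfl⟩ this
  have hpath : ∀ i, i < p → ((τ * v) ^ i) x = (v ^ i) x := by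
    intro i
    induction i with
    | zero => simp
    | succ i ih =>
      intro hi
      rw [pow_succ', Perm.mul_apply, ih (by omega), Perm.mul_apply, ← Perm.mul_apply v, ← pow_succ', hτ _ (hmin _ (by omega) hi)]
  obtain ⟨j, hj⟩ := hodd
  refine ⟨j, ?_⟩
  rw [pow_succ', Perm.mul_apply, hpath _ (by omega), Perm.mul_apply, ← Perm.mul_apply v, ← pow_succ', ← hj, hpx]

theorem merge {x a b : α} (h1 : x ≠ a) (h2 : x ≠ b) (h3 : a ≠ b) {v : Perm α} (hv : Od v)
    (he : ell (c3 x a b) + ell v = ell (c3 x a b * v)) : Od (c3 x a b * v) := by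
  have htop := (add_imp he).2
  have hsep : ∀ p q : α, p ≠ q → (∀ f ∈ Fx (c3 x a b), f p = f q) → ∀ k : ℕ, (v ^ k) p ≠ q := by
    intro p q hpq hf k hk
    have : (Pi.single p 1 : α → ℚ) ∈ Fx (c3 x a b) ⊔ Fx v := by rw [htop]; trivial
    obtain ⟨f, hf1, g, hg, e⟩ := Submodule.mem_sup.1 this
    have e1 := congrFun e p
    have e2 := congrFun e q
    have e3 := Fx_pow hg k p
    rw [hk] at e3
    have e4 := hf f hf1
    simp [Pi.single_apply, hpq.symm] at e1 e2
    linarith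
  have fxa : ∀ f ∈ Fx (c3 x a b), f x = f a := fun f hf => by
    have := hf x; rw [c3_x h1 h2] at this; exact this.symm
  have fab : ∀ f ∈ Fx (c3 x a b), f a = f b := fun f hf => by
    have := hf a; rw [c3_a h2 h3] at this; exact this.symm
  have fxb : ∀ f ∈ Fx (c3 x a b), f x = f b := fun f hf => (fxa f hf).trans (fab f hf)
  obtain ⟨jx, hjx⟩ := path_aux hv (x := x) (τ := c3 x a b) (fun k hk =>
    c3_o hk (hsep _ _ h1 fxa k) (hsep _ _ h2 fxb k))
  obtain ⟨ja, hja⟩ := path_aux hv (x := a) (τ := c3 x a b) (fun k hk =>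
    c3_o (hsep _ _ h1.symm (fun f hf => (fxa f hf).symm) k) hk (hsep _ _ h3 fab k))
  obtain ⟨jb, hjb⟩ := path_aux hv (x := b) (τ := c3 x a b) (fun k hk =>
    c3_o (hsep _ _ h2.symm (fun f hf => (fxb f hf).symm) k) (hsep _ _ h3.symm (fun f hf => (fab f hf).symm) k) hk)
  rw [c3_x h1 h2] at hjx
  rw [c3_a h2 h3] at hja
  rw [c3_b] at hjb
  set τ := c3 x a b with hτ
  set u := τ * v with hu
  apply Od_of
  intro f hf
  have A : ∀ p q : α, ∀ j, (u ^ (2 * j + 1)) p = q → f (u p) = f q ∧ f (u q) = f p := by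
    intro p q j h
    constructor
    · rw [← h, pow_succ, Perm.mul_apply (u ^ (2 * j)), Fx_sq hf]
    · rw [← h, ← Perm.mul_apply, ← pow_succ', show 2 * j + 1 + 1 = 2 * (j + 1) by ring, Fx_sq hf]
  obtain ⟨a1, a2⟩ := A _ _ _ hjx
  obtain ⟨b1, b2⟩ := A _ _ _ hja
  obtain ⟨c1, c2⟩ := A _ _ _ hjb
  have hfτ : f ∈ Fx τ := mem_Fx_c3 (by linarith) (by linarith)
  have huv : ∀ y, f (u y) = f (v y) := fun y => hfτ (v y)
  have hgτ : (fun y => f (v y)) ∈ Fx τ := by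
    apply mem_Fx_c3 <;> simp only [← huv] <;> linarith
  have : f ∈ Fx v := by
    apply Od_imp hv
    intro y
    rw [← hf y, huv]
    exact (hgτ (v y)).symm
  intro y
  rw [huv, this]

end core2

section core3
variable {α : Type*} [Fintype α] [DecidableEq α]

/-- prefix order for the absolute length -/
def le2 (u w : Perm α) : Prop := ell u + ell (u⁻¹ * w) = ell w

theorem le2_Fx {u w : Perm α} (h : le2 u w) : Fx w = Fx u ⊓ Fx (u⁻¹ * w) := by
  have := (add_imp (u := u) (v := u⁻¹ * w) (by rw [mul_inv_cancel_left]; exact h)).1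
  rwa [mul_inv_cancel_left] at this

/-- `u` fixes what `w` fixes -/
def Sub2 (u w : Perm α) : Prop := ∀ y, w y = y → u y = y

theorem Sub2_of_Fx {u w : Perm α} (h : Fx w ≤ Fx u) : Sub2 u w := by
  intro y hy
  have := h (single_mem_Fx hy 1) y
  by_contra hne
  simp [Pi.single_apply, hne] at this

theorem le2_sub {u w : Perm α} (h : le2 u w) : Sub2 u w :=
  Sub2_of_Fx (by rw [le2_Fx h]; exact inf_le_left)

theorem Sub2_quot {u w : Perm α} (h : Sub2 u w) : Sub2 (u⁻¹ * w) w := by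
  intro y hy
  rw [Perm.mul_apply, hy, Perm.inv_eq_iff_eq, h y hy]

theorem Sub2_disj {u1 u2 w1 w2 : Perm α} (h1 : Sub2 u1 w1) (h2 : Sub2 u2 w2) (h : Disjoint w1 w2) :
    Disjoint u1 u2 := fun y => (h y).imp (h1 y) (h2 y)

theorem Sub2_refl (w : Perm α) : Sub2 w w := fun _ h => h

theorem quot_mul {u1 u2 w1 w2 : Perm α} (h1 : Sub2 u1 w1) (h2 : Sub2 u2 w2) (h : Disjoint w1 w2) :
    (u1 * u2)⁻¹ * (w1 * w2) = (u1⁻¹ * w1) * (u2⁻¹ * w2) := by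
  have c : Commute (u2⁻¹) (u1⁻¹ * w1) :=
    ((Sub2_disj (Sub2_quot h1) h2 h).commute.symm).inv_left
  rw [mul_inv_rev]
  calc u2⁻¹ * u1⁻¹ * (w1 * w2) = (u2⁻¹ * (u1⁻¹ * w1)) * w2 := by group
    _ = _ := by rw [c.eq]; group

theorem le2_mul_iff {u1 u2 w1 w2 : Perm α} (h1 : Sub2 u1 w1) (h2 : Sub2 u2 w2) (h : Disjoint w1 w2) :
    le2 (u1 * u2) (w1 * w2) ↔ le2 u1 w1 ∧ le2 u2 w2 := by
  unfold le2
  rw [quot_mul h1 h2 h, ell_disj h, ell_disj (Sub2_disj h1 h2 h),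
    ell_disj (Sub2_disj (Sub2_quot h1) (Sub2_quot h2) h)]
  have t1 := ell_mul_le u1 (u1⁻¹ * w1)
  have t2 := ell_mul_le u2 (u2⁻¹ * w2)
  rw [mul_inv_cancel_left] at t1 t2
  omega

theorem split_disj {u w1 w2 : Perm α} (h : Disjoint w1 w2) (hu : le2 u (w1 * w2)) :
    ∃ u1 u2, u = u1 * u2 ∧ Sub2 u1 w1 ∧ Sub2 u2 w2 := by
  have hS : ∀ y, w1 (u y) ≠ u y ↔ w1 y ≠ y := by
    have : (fun y => if w1 y = y then (0 : ℚ) else 1) ∈ Fx u := by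
      have h0 : Fx (w1 * w2) ≤ Fx u := by rw [le2_Fx hu]; exact inf_le_left
      apply h0
      intro y
      simp only [Perm.mul_apply]
      congr 1
      simp only [eq_iff_iff]
      rcases h y with hy | hy
      · have : w1 (w2 y) = w2 y := by
          rw [← Perm.mul_apply, h.commute.eq, Perm.mul_apply, hy]
        simp [hy, this]
      · rw [hy]; simp
    intro y
    have := this y
    by_cases a : w1 y = y <;> by_cases b : w1 (u y) = u y <;> simp_all
  have hsub := le2_sub hu
  let u1 : Perm α := ofSubtype (u.subtypePerm (p := fun y => w1 y ≠ y) hS)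
  have e1 : ∀ y, w1 y ≠ y → u1 y = u y := fun y hy => by
    exact ofSubtype_apply_of_mem (p := fun y => w1 y ≠ y) _ hy
  have e2 : ∀ y, w1 y = y → u1 y = y := fun y hy => by
    exact ofSubtype_apply_of_not_mem (p := fun y => w1 y ≠ y) _ (by simpa using hy)
  refine ⟨u1, u1⁻¹ * u, by simp, e2, ?_⟩
  intro y hy
  rw [Perm.mul_apply, Perm.inv_eq_iff_eq]
  by_cases h1 : w1 y = y
  · rw [e2 y h1]
    exact hsub y (by rw [Perm.mul_apply, hy, h1])
  · rw [e1 y h1]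

theorem Od_mul_iff {u1 u2 : Perm α} (h : Disjoint u1 u2) : Od (u1 * u2) ↔ Od u1 ∧ Od u2 := by
  have key : ∀ k, (u1 * u2) ^ k = u1 ^ k * u2 ^ k := fun k => h.commute.mul_pow k
  have key' : ∀ k, (u1 * u2) ^ k = u2 ^ k * u1 ^ k := fun k => by
    rw [h.commute.eq]; exact h.commute.symm.mul_pow k
  have fp : ∀ (u : Perm α) y, u y = y → ∀ k : ℕ, (u ^ k) y = y := fun u y hy k =>
    Perm.pow_apply_eq_self_of_apply_eq_self hy k
  constructor
  · intro ho
    constructor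
    · intro y
      rcases h y with hy | hy
      · exact ⟨0, by simpa using hy⟩
      · obtain ⟨j, hj⟩ := ho y
        rw [key, Perm.mul_apply, fp _ _ hy] at hj
        exact ⟨j, hj⟩
    · intro y
      rcases h y with hy | hy
      · obtain ⟨j, hj⟩ := ho y
        rw [key', Perm.mul_apply, fp _ _ hy] at hj
        exact ⟨j, hj⟩
      · exact ⟨0, by simpa using hy⟩
  · rintro ⟨h1, h2⟩ y
    rcases h y with hy | hy
    · obtain ⟨j, hj⟩ := h2 y
      exact ⟨j, by rw [key', Perm.mul_apply, fp _ _ hy, hj]⟩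
    · obtain ⟨j, hj⟩ := h1 y
      exact ⟨j, by rw [key, Perm.mul_apply, fp _ _ hy, hj]⟩

open Classical in
/-- admissible prefixes -/
noncomputable def good (A : Finset α) (w : Perm α) : Finset (Perm α) :=
  Finset.univ.filter (fun u => Od u ∧ (∀ x ∈ A, u x = x) ∧ le2 u w)

theorem mem_good {A : Finset α} {w u : Perm α} : u ∈ good A w ↔ Od u ∧ (∀ x ∈ A, u x = x) ∧ le2 u w := by
  simp [good]

/-- number of minimal factorizations with prescribed fixed points -/
noncomputable def ff : List (Finset α) → Perm α → ℕ
  | [], w => if w = 1 then 1 else 0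
  | A :: L, w => ∑ u ∈ good A w, ff L (u⁻¹ * w)

theorem ff_cons (A : Finset α) (L : List (Finset α)) (w : Perm α) :
    ff (A :: L) w = ∑ u ∈ good A w, ff L (u⁻¹ * w) := rfl

theorem ff_disj (L : List (Finset α)) : ∀ {w1 w2 : Perm α}, Disjoint w1 w2 →
    ff L (w1 * w2) = ff L w1 * ff L w2 := by
  induction L with
  | nil =>
    intro w1 w2 h
    have : w1 * w2 = 1 ↔ w1 = 1 ∧ w2 = 1 := h.mul_eq_one_iff
    simp only [ff, this]
    by_cases a : w1 = 1 <;> by_cases b : w2 = 1 <;> simp [a, b]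
  | cons A L ih =>
    intro w1 w2 h
    rw [ff_cons, ff_cons, ff_cons, Finset.sum_mul_sum, ← Finset.sum_product']
    symm
    refine Finset.sum_bij (fun p _ => p.1 * p.2) ?_ ?_ ?_ ?_
    · rintro ⟨u1, u2⟩ hp
      simp only [Finset.mem_product, mem_good] at hp
      obtain ⟨⟨a1, a2, a3⟩, b1, b2, b3⟩ := hp
      have hd := Sub2_disj (le2_sub a3) (le2_sub b3) h
      rw [mem_good]
      refine ⟨(Od_mul_iff hd).2 ⟨a1, b1⟩, fun x hx => ?_, (le2_mul_iff (le2_sub a3) (le2_sub b3) h).2 ⟨a3, b3⟩⟩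
      rw [Perm.mul_apply, b2 x hx, a2 x hx]
    · rintro ⟨u1, u2⟩ hp ⟨v1, v2⟩ hp' e
      simp only [Finset.mem_product, mem_good] at hp hp'
      obtain ⟨⟨-, -, a3⟩, -, -, b3⟩ := hp
      obtain ⟨⟨-, -, c3⟩, -, -, d3⟩ := hp'
      simp only at e
      have : u1 = v1 := by
        ext y
        rcases h y with hy | hy
        · rw [le2_sub a3 y hy, le2_sub c3 y hy]
        · have := congrArg (fun p : Perm α => p y) e
          simpa [le2_sub b3 y hy, le2_sub d3 y hy] using this
      subst this
      simpa using e
    · intro u hu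
      rw [mem_good] at hu
      obtain ⟨a1, a2, a3⟩ := hu
      obtain ⟨u1, u2, rfl, h1, h2⟩ := split_disj h a3
      have hd := Sub2_disj h1 h2 h
      rw [le2_mul_iff h1 h2 h] at a3
      rw [Od_mul_iff hd] at a1
      refine ⟨⟨u1, u2⟩, ?_, rfl⟩
      simp only [Finset.mem_product, mem_good]
      refine ⟨⟨a1.1, fun x hx => ?_, a3.1⟩, a1.2, fun x hx => ?_, a3.2⟩
      · exact ((hd.mul_apply_eq_iff).1 (a2 x hx)).1
      · exact ((hd.mul_apply_eq_iff).1 (a2 x hx)).2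
    · rintro ⟨u1, u2⟩ hp
      simp only [Finset.mem_product, mem_good] at hp
      obtain ⟨⟨a1, a2, a3⟩, b1, b2, b3⟩ := hp
      rw [quot_mul (le2_sub a3) (le2_sub b3) h]
      exact (ih (Sub2_disj (Sub2_quot (le2_sub a3)) (Sub2_quot (le2_sub b3)) h)).symm

theorem le2_two {u v w : Perm α} : (le2 u w ∧ le2 v (u⁻¹ * w)) ↔
    ell u + ell v + ell (v⁻¹ * (u⁻¹ * w)) = ell w := by
  unfold le2
  have t1 := ell_mul_le u (u⁻¹ * w)
  have t2 := ell_mul_le v (v⁻¹ * (u⁻¹ * w))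
  rw [mul_inv_cancel_left] at t1 t2
  omega

theorem le2_two' {u v w : Perm α} (h : ell u + ell v = ell (u * v)) :
    le2 (u * v) w ↔ (le2 u w ∧ le2 v (u⁻¹ * w)) := by
  rw [le2_two, h, le2, mul_inv_rev, mul_assoc]

theorem ff_comm {A A' : Finset α} (hA : A' ⊆ A) (L : List (Finset α)) (w : Perm α) :
    ff (A :: A' :: L) w = ff (A' :: A :: L) w := by
  simp only [ff_cons, Finset.sum_sigma']
  refine Finset.sum_bij' (fun p _ => ⟨p.1 * p.2 * p.1⁻¹, p.1⟩) (fun p _ => ⟨p.2, p.2⁻¹ * p.1 * p.2⟩) ?_ ?_ ?_ ?_ ?_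
  · rintro ⟨u, v⟩ hp
    simp only [Finset.mem_sigma, mem_good] at hp ⊢
    obtain ⟨⟨a1, a2, a3⟩, b1, b2, b3⟩ := hp
    have h := le2_two.1 ⟨a3, b3⟩
    have h' := (le2_two (u := u * v * u⁻¹) (v := u) (w := w)).2 (by
      rw [ell_conj, show u⁻¹ * ((u * v * u⁻¹)⁻¹ * w) = v⁻¹ * (u⁻¹ * w) by group]; omega)
    refine ⟨⟨Od_conj b1, fun x hx => ?_, h'.1⟩, a1, a2, h'.2⟩
    have e : u⁻¹ x = x := by rw [Perm.inv_eq_iff_eq, a2 x (hA hx)]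
    rw [Perm.mul_apply, Perm.mul_apply, e, b2 x hx, a2 x (hA hx)]
  · rintro ⟨p, r⟩ hp
    simp only [Finset.mem_sigma, mem_good] at hp ⊢
    obtain ⟨⟨a1, a2, a3⟩, b1, b2, b3⟩ := hp
    have h := le2_two.1 ⟨a3, b3⟩
    have ec : ell (r⁻¹ * p * r) = ell p := by
      have := ell_conj r⁻¹ p; rwa [inv_inv] at this
    have h' := (le2_two (u := r) (v := r⁻¹ * p * r) (w := w)).2 (by
      rw [ec, show (r⁻¹ * p * r)⁻¹ * (r⁻¹ * w) = r⁻¹ * (p⁻¹ * w) by group]; omega)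
    have oc := Od_conj (u := r⁻¹) a1
    rw [inv_inv] at oc
    refine ⟨⟨b1, b2, h'.1⟩, oc, fun x hx => ?_, h'.2⟩
    rw [Perm.mul_apply, Perm.mul_apply, b2 x (hA hx), a2 x hx, Perm.inv_eq_iff_eq, b2 x (hA hx)]
  · rintro ⟨u, v⟩ hp
    simp only [Sigma.mk.injEq, heq_eq_eq, true_and]
    group
  · rintro ⟨p, r⟩ hp
    simp only [Sigma.mk.injEq, heq_eq_eq, and_true]
    group
  · rintro ⟨u, v⟩ hp
    simp only
    congr 1
    group

theorem ff_perm {x : α} {L L' : List (Finset α)} (h : L.Perm L') :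
    (∀ A ∈ L, A = ∅ ∨ A = {x}) → ∀ w, ff L w = ff L' w := by
  induction h with
  | nil => intros; rfl
  | cons A _ ih =>
    intro hL w
    rw [ff_cons, ff_cons]
    exact Finset.sum_congr rfl fun u _ => ih (fun A hA => hL A (by simp [hA])) _
  | swap A A' L =>
    intro hL w
    have h1 := hL A (by simp)
    have h2 := hL A' (by simp)
    rcases h1 with rfl | rfl
    · exact ff_comm (by simp) _ _
    · rcases h2 with rfl | rfl
      · exact (ff_comm (by simp) _ _).symm
      · rfl
  | trans p1 _ ih1 ih2 =>
    intro hL w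
    rw [ih1 hL, ih2 (fun A hA => hL A (p1.mem_iff.2 hA))]

theorem ff_local {L L' : List (Finset α)} : ∀ {w : Perm α},
    List.Forall₂ (fun A A' : Finset α => ∀ y, w y ≠ y → (y ∈ A ↔ y ∈ A')) L L' → ff L w = ff L' w := by
  induction L generalizing L' with
  | nil =>
    intro w h
    cases h; rfl
  | cons A L ih =>
    intro w h
    cases h with
    | cons h1 h2 =>
      rename_i A' L'
      rw [ff_cons, ff_cons]
      have e : good A w = good A' w := by
        ext u
        rw [mem_good, mem_good]
        constructor
        · rintro ⟨a1, a2, a3⟩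
          refine ⟨a1, fun y hy => ?_, a3⟩
          by_cases hw : w y = y
          · exact le2_sub a3 y hw
          · exact a2 y ((h1 y hw).2 hy)
        · rintro ⟨a1, a2, a3⟩
          refine ⟨a1, fun y hy => ?_, a3⟩
          by_cases hw : w y = y
          · exact le2_sub a3 y hw
          · exact a2 y ((h1 y hw).1 hy)
      rw [e]
      refine Finset.sum_congr rfl fun u hu => ih ?_
      rw [mem_good] at hu
      refine h2.imp fun B B' hB y hy => hB y fun hw => hy (Sub2_quot (le2_sub hu.2.2) y hw)

theorem ff_one (L : List (Finset α)) : ff L 1 = 1 := by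
  induction L with
  | nil => simp [ff]
  | cons A L ih =>
    have : good A 1 = {1} := by
      ext u
      rw [mem_good, Finset.mem_singleton]
      constructor
      · rintro ⟨-, -, h⟩
        ext y
        rw [le2_sub h y rfl]; rfl
      · rintro rfl
        exact ⟨Od_one, by simp, by simp [le2]⟩
    rw [ff_cons, this]
    simp [ih]

theorem ff_zero {x : α} (L : List (Finset α)) : ∀ {w : Perm α}, w x ≠ x → (∀ A ∈ L, A = {x}) → ff L w = 0 := by
  induction L with
  | nil =>
    intro w h _
    simp only [ff, ite_eq_right_iff]
    rintro rfl; simp at h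
  | cons A L ih =>
    intro w h hL
    rw [ff_cons]
    apply Finset.sum_eq_zero
    intro u hu
    rw [mem_good] at hu
    have hx : u x = x := hu.2.1 x (by rw [hL A (by simp)]; simp)
    apply ih
    · intro h'
      rw [Perm.mul_apply, Perm.inv_eq_iff_eq, hx] at h'
      exact h h'
    · exact fun A hA => hL A (by simp [hA])

end core3

section core4
variable {α : Type*} [Fintype α] [DecidableEq α]

theorem swap_rel {x y a : α} (h1 : x ≠ y) (h2 : x ≠ a) (h3 : y ≠ a) :
    swap x y * swap y a = swap x a * swap x y := by
  ext z
  simp only [Perm.mul_apply, swap_apply_def]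
  split_ifs <;> simp_all

theorem form_split2 (a : α) (l2 : List α) : ∀ (l1 : List α) (x : α), (x :: l1 ++ a :: l2).Nodup →
    (x :: l1 ++ a :: l2).formPerm = swap x a * (x :: l1).formPerm * (a :: l2).formPerm
  | [], x, _ => by simp
  | y :: l1, x, h => by
    have h' : (y :: l1 ++ a :: l2).Nodup := (List.nodup_cons.1 h).2
    have ih := form_split2 a l2 l1 y h'
    have hx : x ∉ y :: l1 ++ a :: l2 := (List.nodup_cons.1 h).1
    have hy : y ∉ l1 ++ a :: l2 := (List.nodup_cons.1 h').1
    have e1 : x ≠ y := fun e => hx (by simp [e])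
    have e2 : x ≠ a := fun e => hx (by simp [e])
    have e3 : y ≠ a := fun e => hy (by simp [e])
    rw [List.cons_append, List.cons_append, List.formPerm_cons_cons, ← List.cons_append, ih,
      List.formPerm_cons_cons, ← mul_assoc, ← mul_assoc, swap_rel e1 e2 e3, ← mul_assoc]

theorem form_disj {l l' : List α} (h : l.Disjoint l') : Disjoint l.formPerm l'.formPerm := by
  intro y
  by_cases hy : y ∈ l
  · exact Or.inr (List.formPerm_apply_of_notMem (h hy))
  · exact Or.inl (List.formPerm_apply_of_notMem hy)

theorem form_split3 {x a b : α} {l1 l2 l3 : List α} (h : (x :: l1 ++ a :: (l2 ++ b :: l3)).Nodup) :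
    (x :: l1 ++ a :: (l2 ++ b :: l3)).formPerm =
      c3 x a b * ((x :: l1).formPerm * (a :: l2).formPerm * (b :: l3).formPerm) := by
  rw [form_split2 _ _ _ _ h]
  have h2 := (List.nodup_append.1 h).2.1
  rw [← List.cons_append] at h2 ⊢
  rw [form_split2 _ _ _ _ h2, c3]
  have hc : Commute (x :: l1).formPerm (swap a b) := by
    rw [← List.formPerm_pair]
    apply Equiv.Perm.Disjoint.commute
    apply form_disj
    intro y hy hy'
    have := (List.nodup_append.1 h).2.2 y hy y
    apply this _ rfl
    simp at hy'
    rcases hy' with rfl | rfl <;> simp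
  have := hc.eq
  calc swap x a * (x :: l1).formPerm * (swap a b * (a :: l2).formPerm * (b :: l3).formPerm)
      = swap x a * ((x :: l1).formPerm * swap a b) * (a :: l2).formPerm * (b :: l3).formPerm := by group
    _ = _ := by rw [this]; group

theorem c3_sq {x a b : α} (h1 : x ≠ a) (h2 : x ≠ b) (h3 : a ≠ b) : c3 x b a = c3 x a b * c3 x a b := by
  ext z
  by_cases hx : z = x
  · subst hx; rw [Perm.mul_apply, c3_x h1 h2, c3_a h2 h3, c3_x h2 h1]
  by_cases ha : z = a
  · subst ha; rw [Perm.mul_apply, c3_a h2 h3, c3_b, c3_b]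
  by_cases hb : z = b
  · subst hb; rw [Perm.mul_apply, c3_b, c3_x h1 h2, c3_a h1 h3.symm]
  rw [Perm.mul_apply, c3_o hx ha hb, c3_o hx ha hb, c3_o hx hb ha]

theorem form_bad {x a b : α} {l1 l2 l3 : List α} (h : (x :: l1 ++ b :: (l2 ++ a :: l3)).Nodup) :
    ell ((c3 x a b)⁻¹ * (x :: l1 ++ b :: (l2 ++ a :: l3)).formPerm) =
      ell (x :: l1 ++ b :: (l2 ++ a :: l3)).formPerm := by
  have hp : (x :: l1 ++ b :: (l2 ++ a :: l3)).Perm (x :: l1 ++ a :: (l3 ++ b :: l2)) := by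
    apply List.Perm.append_left
    rw [← List.cons_append, ← List.cons_append]
    exact List.perm_append_comm
  have h' := hp.nodup_iff.1 h
  have n : x ≠ a ∧ x ≠ b ∧ a ≠ b := by
    clear hp h
    simp [List.nodup_append] at h'
    refine ⟨?_, ?_, ?_⟩ <;> rintro rfl <;> simp_all
  have e : (c3 x a b)⁻¹ * (x :: l1 ++ b :: (l2 ++ a :: l3)).formPerm = (x :: l1 ++ a :: (l3 ++ b :: l2)).formPerm := by
    rw [form_split3 h, form_split3 h', c3_sq n.1 n.2.1 n.2.2]
    have hd : Disjoint (b :: l2).formPerm (a :: l3).formPerm := by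
      apply form_disj
      have := (List.nodup_append.1 h).2.1
      rw [← List.cons_append] at this
      exact List.disjoint_of_nodup_append this
    rw [mul_assoc (x :: l1).formPerm, hd.commute.eq]
    group
  rw [e, ell_formPerm _ h, ell_formPerm _ h', hp.length_eq]

theorem list_split {t : List α} {i j : ℕ} (hij : i < j) (hj : j < t.length) (d : α) :
    ∃ l1 l2 l3, t = l1 ++ t.getD i d :: (l2 ++ t.getD j d :: l3) ∧ l1.length = i ∧ l2.length = j - i - 1 ∧
      l3.length = t.length - 1 - j := by
  refine ⟨t.take i, (t.drop (i + 1)).take (j - i - 1), t.drop (j + 1), ?_, ?_, ?_, ?_⟩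
  · have e1 : t.drop i = t.getD i d :: t.drop (i + 1) := by
      rw [List.getD_eq_getElem _ _ (by omega)]
      exact List.drop_eq_getElem_cons (by omega)
    have e2 : t.drop j = t.getD j d :: t.drop (j + 1) := by
      rw [List.getD_eq_getElem _ _ (by omega)]
      exact List.drop_eq_getElem_cons (by omega)
    have e3 : t.drop (i + 1) = (t.drop (i + 1)).take (j - i - 1) ++ t.drop j := by
      have := List.take_append_drop (j - i - 1) (t.drop (i + 1))
      rw [List.drop_drop, show i + 1 + (j - i - 1) = j by omega] at this
      exact this.symm
    rw [← e2, ← e3, ← e1, List.take_append_drop]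
  · simp; omega
  · simp; omega
  · simp; omega

theorem split_facts {x a b : α} {l1 l2 l3 : List α} (h : (x :: l1 ++ a :: (l2 ++ b :: l3)).Nodup) :
    x ≠ a ∧ x ≠ b ∧ a ≠ b ∧ (x :: l1).Nodup ∧ (a :: l2).Nodup ∧ (b :: l3).Nodup ∧
    (x :: l1).Disjoint (a :: l2) ∧ (x :: l1).Disjoint (b :: l3) ∧ (a :: l2).Disjoint (b :: l3) := by
  rw [← List.cons_append] at h
  have d1 := List.disjoint_of_nodup_append h
  obtain ⟨n1, n2, -⟩ := List.nodup_append.1 h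
  have d2 := List.disjoint_of_nodup_append n2
  obtain ⟨n3, n4, -⟩ := List.nodup_append.1 n2
  rw [List.disjoint_append_right] at d1
  obtain ⟨d11, d12⟩ := d1
  refine ⟨?_, ?_, ?_, n1, n3, n4, d11, d12, d2⟩
  · rintro rfl; exact d11 (a := x) (by simp) (by simp)
  · rintro rfl; exact d12 (a := x) (by simp) (by simp)
  · rintro rfl; exact d2 (a := a) (by simp) (by simp)

theorem le2_split {x a b : α} {l1 l2 l3 : List α} (h : (x :: l1 ++ a :: (l2 ++ b :: l3)).Nodup) :
    le2 (c3 x a b) (x :: l1 ++ a :: (l2 ++ b :: l3)).formPerm := by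
  obtain ⟨h1, h2, h3, n1, n2, n3, d1, d2, d3⟩ := split_facts h
  unfold le2
  have D1 := form_disj d1
  have D2 : Disjoint ((x :: l1).formPerm * (a :: l2).formPerm) (b :: l3).formPerm :=
    (form_disj d2).mul_left (form_disj d3)
  rw [ell_formPerm _ h, form_split3 h, inv_mul_cancel_left, ell_disj D2, ell_disj D1, ell_formPerm _ n1,
    ell_formPerm _ n2, ell_formPerm _ n3, ell_c3 h1 h2 h3]
  simp; omega

theorem ff_split {x a b : α} {l1 l2 l3 : List α} (h : (x :: l1 ++ a :: (l2 ++ b :: l3)).Nodup)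
    (L : List (Finset α)) :
    ff L ((c3 x a b)⁻¹ * (x :: l1 ++ a :: (l2 ++ b :: l3)).formPerm) =
    ff L (x :: l1).formPerm * ff L (a :: l2).formPerm * ff L (b :: l3).formPerm := by
  obtain ⟨h1, h2, h3, n1, n2, n3, d1, d2, d3⟩ := split_facts h
  have D1 := form_disj d1
  have D2 : Disjoint ((x :: l1).formPerm * (a :: l2).formPerm) (b :: l3).formPerm :=
    (form_disj d2).mul_left (form_disj d3)
  rw [form_split3 h, inv_mul_cancel_left, ff_disj _ D2, ff_disj _ D1]

theorem Od_sq_ne {u : Perm α} (h : Od u) {x : α} (hx : u x ≠ x) : u (u x) ≠ x := by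
  intro e
  obtain ⟨j, hj⟩ := h x
  have : ∀ j : ℕ, (u ^ (2 * j)) x = x := by
    intro j
    rw [pow_mul]
    exact Perm.pow_apply_eq_self_of_apply_eq_self (by rw [pow_two]; exact e) j
  rw [pow_succ', Perm.mul_apply, this] at hj
  exact hx hj

theorem ff_peel {x : α} {t : List α} (h : (x :: t).Nodup) (L : List (Finset α)) :
    ff (∅ :: L) (x :: t).formPerm = ff ({x} :: L) (x :: t).formPerm +
      ∑ j ∈ Finset.range t.length, ∑ i ∈ Finset.range j,
        ff ({x, t.getD i x} :: L) ((c3 x (t.getD i x) (t.getD j x))⁻¹ * (x :: t).formPerm) := by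
  classical
  set w := (x :: t).formPerm with hw
  have hG1 : (good ∅ w).filter (fun u => u x = x) = good {x} w := by
    ext u; simp only [Finset.mem_filter, mem_good]; simp; tauto
  rw [ff_cons, ← Finset.sum_filter_add_sum_filter_not _ (fun u : Perm α => u x = x), hG1, ← ff_cons]
  congr 1
  simp only [ff_cons, Finset.sum_sigma']
  have hsp : ∀ i j, i < j → j < t.length → ∃ l1 l2 l3,
      x :: t = x :: l1 ++ t.getD i x :: (l2 ++ t.getD j x :: l3) := by
    intro i j hij hj
    obtain ⟨l1, l2, l3, e, -⟩ := list_split hij hj x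
    exact ⟨l1, l2, l3, by rw [List.cons_append, ← e]⟩
  symm
  refine Finset.sum_bij (fun p _ => c3 x (t.getD p.2.1 x) (t.getD p.1 x) * p.2.2) ?_ ?_ ?_ ?_
  · rintro ⟨j, i, u⟩ hp
    simp only [Finset.mem_sigma, Finset.mem_range, mem_good] at hp
    obtain ⟨hj, hi, a1, a2, a3⟩ := hp
    obtain ⟨l1, l2, l3, e⟩ := hsp i j hi hj
    have hn := h
    simp only at *
    generalize t.getD i x = a at *
    generalize t.getD j x = b at *
    rw [e] at hn
    obtain ⟨h1, h2, h3, -⟩ := split_facts hn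
    have hl := le2_split hn
    rw [← e, ← hw] at hl
    have ux : u x = x := a2 x (by simp)
    have ua : u a = a := a2 a (by simp)
    have pe := peel_ell h1 h2 h3 ux ua
    rw [Finset.mem_filter, mem_good]
    refine ⟨⟨merge h1 h2 h3 a1 pe, by simp, (le2_two' pe).2 ⟨hl, a3⟩⟩, ?_⟩
    rw [Perm.mul_apply, ux, c3_x h1 h2]; exact h1.symm
  · rintro ⟨j, i, u⟩ hp ⟨j', i', u'⟩ hp' e
    simp only [Finset.mem_sigma, Finset.mem_range, mem_good] at hp hp' e
    obtain ⟨hj, hi, a1, a2, a3⟩ := hp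
    obtain ⟨hj', hi', a1', a2', a3'⟩ := hp'
    obtain ⟨l1, l2, l3, es⟩ := hsp i j hi hj
    obtain ⟨l1', l2', l3', es'⟩ := hsp i' j' hi' hj'
    have hn := h
    have hn' := h
    rw [es] at hn
    rw [es'] at hn'
    obtain ⟨h1, h2, h3, -⟩ := split_facts hn
    obtain ⟨h1', h2', h3', -⟩ := split_facts hn'
    have ei := congrArg (fun p : Perm α => p x) e
    simp only [Perm.mul_apply] at ei
    rw [a2 x (by simp), a2' x (by simp), c3_x h1 h2, c3_x h1' h2'] at ei
    have ej := congrArg (fun p : Perm α => p (t.getD i x)) e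
    simp only [Perm.mul_apply] at ej
    rw [a2 (t.getD i x) (by simp), c3_a h2 h3, ei, a2' (t.getD i' x) (by simp), c3_a h2' h3'] at ej
    have nt : t.Nodup := (List.nodup_cons.1 h).2
    have hii : i = i' := by
      rw [List.getD_eq_getElem _ _ (by omega), List.getD_eq_getElem _ _ (by omega)] at ei
      exact (nt.getElem_inj_iff).1 ei
    have hjj : j = j' := by
      rw [List.getD_eq_getElem _ _ (by omega), List.getD_eq_getElem _ _ (by omega)] at ej
      exact (nt.getElem_inj_iff).1 ej
    subst hii hjj
    have := mul_left_cancel e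
    rw [this]
  · intro u hu
    rw [Finset.mem_filter, mem_good] at hu
    obtain ⟨⟨o, -, hl⟩, hx⟩ := hu
    have hxa : x ≠ u x := fun e => hx e.symm
    have hab : u x ≠ u (u x) := fun e => hx (u.injective e.symm)
    have hxb : x ≠ u (u x) := (Od_sq_ne o hx).symm
    have mem : ∀ y, u y ≠ y → y ∈ x :: t := by
      intro y hy
      by_contra hn
      exact hy (le2_sub hl y (List.formPerm_apply_of_notMem hn))
    have ma : u x ∈ t := by
      have := mem (u x) hab.symm
      simpa [hxa.symm] using this
    have mb : u (u x) ∈ t := by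
      have := mem (u (u x)) (fun e => hab (u.injective (e.symm)))
      simpa [hxb.symm] using this
    obtain ⟨i, hi, ei⟩ := List.getElem_of_mem ma
    obtain ⟨j, hj, ej⟩ := List.getElem_of_mem mb
    have gi : t.getD i x = u x := by rw [List.getD_eq_getElem _ _ hi, ei]
    have gj : t.getD j x = u (u x) := by rw [List.getD_eq_getElem _ _ hj, ej]
    set a := u x with ha
    set b := u a with hb
    set τ := c3 x a b with hτ
    have vx : (τ⁻¹ * u) x = x := by
      rw [Perm.mul_apply, Perm.inv_eq_iff_eq, hτ, c3_x hxa hxb]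
    have va : (τ⁻¹ * u) a = a := by
      rw [Perm.mul_apply, Perm.inv_eq_iff_eq, hτ, c3_a hxb hab]
    have pe := peel_ell hxa hxb hab vx va
    have hu' : c3 x a b * (τ⁻¹ * u) = u := by rw [← hτ]; group
    have ov : Od (τ⁻¹ * u) := peel_rev hxa hxb hab vx va (by rw [hu']; exact o)
    have l2 := (le2_two' (w := w) pe).1 (by rw [hu']; exact hl)
    have hij : i < j := by
      by_contra hn
      have : j < i := by
        rcases Nat.lt_or_ge j i with h | h
        · exact h
        · exfalso
          have : i = j := by omega
          subst this
          exact hab (gi.symm.trans gj)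
      obtain ⟨l1, l2', l3, es⟩ := hsp j i this hi
      rw [gi, gj] at es
      have hn' := h
      rw [es] at hn'
      have hbad := form_bad hn'
      rw [← es, ← hw] at hbad
      have := l2.1
      unfold le2 at this
      rw [hbad, ell_c3 hxa hxb hab] at this
      omega
    refine ⟨⟨j, i, τ⁻¹ * u⟩, ?_, ?_⟩
    · simp only [Finset.mem_sigma, Finset.mem_range, mem_good]
      refine ⟨hj, hij, ov, ?_, ?_⟩
      · rw [gi]; intro y hy
        simp only [Finset.mem_insert, Finset.mem_singleton] at hy
        rcases hy with rfl | rfl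
        · exact vx
        · exact va
      · rw [gi, gj]; exact l2.2
    · simp only [gi, gj]; exact hu'
  · rintro ⟨j, i, u⟩ hp
    simp only [mul_inv_rev, mul_assoc]

open PowerSeries in
theorem ff_val (q : ℕ) (B : PowerSeries ℕ) (hB : B = 1 + X ^ 2 * B ^ (2 * q - 1)) :
    ∀ (k : ℕ) (x : α) (t : List α), t.length = k → (x :: t).Nodup → ∀ L : List (Finset α), L.length = q →
      (∀ A ∈ L, A = ∅ ∨ A = {x}) → ff L (x :: t).formPerm = coeff k (B ^ (L.count ∅)) := by
  have hcoef : ∀ (k : ℕ) (P Q : PowerSeries ℕ), coeff k (X * (P * Q)) =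
      ∑ i ∈ Finset.range k, coeff i P * coeff (k - 1 - i) Q := by
    intro k P Q
    cases k with
    | zero => simp
    | succ k =>
      rw [coeff_succ_X_mul, coeff_mul, Finset.Nat.sum_antidiagonal_eq_sum_range_succ_mk]
      rfl
  intro k
  induction k using Nat.strong_induction_on with
  | _ k IH =>
  intro x t ht hn
  have main : ∀ s, ∀ L : List (Finset α), L.length = q → (∀ A ∈ L, A = ∅ ∨ A = {x}) → L.count ∅ = s →
      ff L (x :: t).formPerm = coeff k (B ^ s) := by
    intro s
    induction s with
    | zero =>
      intro L hq hL hs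
      have hL' : ∀ A ∈ L, A = {x} := by
        intro A hA
        rcases hL A hA with rfl | h
        · exact absurd hA (List.count_eq_zero.1 hs)
        · exact h
      cases t with
      | nil =>
        simp at ht; subst ht
        simp [ff_one]
      | cons y t =>
        rw [ff_zero L _ hL']
        · simp at ht; rw [← ht]; simp [coeff_one]
        · rw [List.formPerm_apply_head _ _ _ hn]
          intro e; simp [e] at hn
    | succ s ih =>
      intro L hq hL hs
      have hmem : ∅ ∈ L := by
        apply List.count_pos_iff.1; omega
      have hperm := List.perm_cons_erase hmem
      rw [ff_perm hperm hL]
      set L' := L.erase ∅ with hL'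
      have hlen : L'.length + 1 = q := by rw [← hq, hperm.length_eq]; simp
      have hLL : ∀ A ∈ L', A = ∅ ∨ A = {x} := fun A hA => hL A (List.mem_of_mem_erase hA)
      have hcnt : L'.count ∅ = s := by
        have := hperm.count_eq ∅
        rw [hs, List.count_cons_self] at this; omega
      have hx0 : ({x} : Finset α) ≠ ∅ := Finset.singleton_ne_empty x
      rw [ff_peel hn, ih ({x} :: L') (by simp [hlen]) (by simpa using hLL)
        (by rw [List.count_cons_of_ne hx0, hcnt])]
      have hsum : ∀ j ∈ Finset.range t.length, ∀ i ∈ Finset.range j,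
          ff ({x, t.getD i x} :: L') ((c3 x (t.getD i x) (t.getD j x))⁻¹ * (x :: t).formPerm) =
          coeff i (B ^ s) * coeff (j - 1 - i) (B ^ (q - 1)) * coeff (k - 1 - j) (B ^ q) := by
        intro j hj i hi
        rw [Finset.mem_range] at hi hj
        obtain ⟨l1, l2, l3, e, e1, e2, e3⟩ := list_split hi hj x
        have e' : x :: t = x :: l1 ++ t.getD i x :: (l2 ++ t.getD j x :: l3) := by
          rw [List.cons_append, ← e]
        have hn' := hn
        rw [e'] at hn'
        rw [e']
        generalize t.getD i x = a at *
        generalize t.getD j x = b at *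
        rw [ff_split hn']
        obtain ⟨h1, h2, h3, n1, n2, n3, d1, d2, d3⟩ := split_facts hn'
        have mv : ∀ {l : List α} {y : α}, l.formPerm y ≠ y → y ∈ l := fun h => List.mem_of_formPerm_apply_ne h
        congr 1
        · congr 1
          · rw [ff_local (L' := {x} :: L'), IH l1.length (by omega) x l1 rfl n1 _ (by simpa using hlen)
              (by simpa using hLL), List.count_cons_of_ne hx0, hcnt, e1]
            refine List.Forall₂.cons ?_ (List.forall₂_same.2 fun _ _ _ _ => Iff.rfl)
            intro y hy
            have : y ≠ a := fun hya => d1 (mv hy) (by simp [hya])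
            simp [this]
          · rw [ff_local (L' := {a} :: List.replicate (q - 1) ∅), IH l2.length (by omega) a l2 rfl n2 _
              (by simp; omega) (by simp), List.count_cons_of_ne (Finset.singleton_ne_empty a),
              List.count_replicate_self, e2, show j - i - 1 = j - 1 - i by omega]
            have hyx : ∀ y, (a :: l2).formPerm y ≠ y → y ≠ x := fun y hy hyx => d1 (a := x) (by simp) (hyx ▸ mv hy)
            refine List.Forall₂.cons ?_ ?_
            · intro y hy
              simp [hyx y hy]
            · rw [List.forall₂_iff_get]
              refine ⟨by simp; omega, fun i h1 h2 y hy => ?_⟩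
              rcases hLL _ (List.get_mem L' ⟨i, h1⟩) with h | h <;> rw [h] <;> simp [hyx y hy]
        · rw [ff_local (L' := List.replicate q ∅), IH l3.length (by omega) b l3 rfl n3 _
              (by simp) (by simp),
              List.count_replicate_self, e3, ht]
          have hyx : ∀ y, (b :: l3).formPerm y ≠ y → y ≠ x := fun y hy hyx => d2 (a := x) (by simp) (hyx ▸ mv hy)
          have hya : ∀ y, (b :: l3).formPerm y ≠ y → y ≠ a := fun y hy hyx => d3 (a := a) (by simp) (hyx ▸ mv hy)
          rw [← hlen, List.replicate_succ]
          refine List.Forall₂.cons ?_ ?_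
          · intro y hy
            simp [hyx y hy, hya y hy]
          · rw [List.forall₂_iff_get]
            refine ⟨by simp, fun i h1 h2 y hy => ?_⟩
            rcases hLL _ (List.get_mem L' ⟨i, h1⟩) with h | h <;> rw [h] <;> simp [hyx y hy]
      rw [Finset.sum_congr rfl fun j hj => Finset.sum_congr rfl (hsum j hj), ht]
      have : B ^ (s + 1) = B ^ s + X * ((X * (B ^ s * B ^ (q - 1))) * B ^ q) := by
        rw [pow_succ]
        nth_rewrite 2 [hB]
        rw [show 2 * q - 1 = (q - 1) + q by omega, pow_add]
        ring
      rw [this, map_add, hcoef]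
      congr 1
      refine Finset.sum_congr rfl fun j _ => ?_
      rw [hcoef, Finset.sum_mul]
  intro L hq hL
  exact main _ L hq hL rfl

end core4

section ps
open PowerSeries

/-- agreement of low coefficients -/
def Agree (i : ℕ) (P Q : PowerSeries ℕ) : Prop := ∀ k < i, coeff k P = coeff k Q

theorem Agree.mul {i : ℕ} {P Q P' Q' : PowerSeries ℕ} (h : Agree i P Q) (h' : Agree i P' Q') :
    Agree i (P * P') (Q * Q') := by
  intro k hk
  rw [coeff_mul, coeff_mul]
  refine Finset.sum_congr rfl fun x hx => ?_
  rw [Finset.HasAntidiagonal.mem_antidiagonal] at hx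
  rw [h _ (by omega), h' _ (by omega)]

theorem Agree.pow {i : ℕ} {P Q : PowerSeries ℕ} (h : Agree i P Q) (p : ℕ) : Agree i (P ^ p) (Q ^ p) := by
  induction p with
  | zero => intro k _; simp
  | succ p ih => rw [pow_succ, pow_succ]; exact ih.mul h

theorem Agree.step {i : ℕ} {P Q : PowerSeries ℕ} (h : Agree i P Q) (p : ℕ) :
    Agree (i + 1) (1 + X ^ 2 * P ^ p) (1 + X ^ 2 * Q ^ p) := by
  intro k hk
  rw [map_add, map_add, coeff_X_pow_mul', coeff_X_pow_mul']
  split_ifs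
  · rw [h.pow p _ (by omega)]
  · rfl

/-- iterates -/
noncomputable def Bit (p : ℕ) : ℕ → PowerSeries ℕ
  | 0 => 1
  | i + 1 => 1 + X ^ 2 * Bit p i ^ p

theorem Bit_agree (p : ℕ) : ∀ i, Agree i (Bit p i) (Bit p (i + 1))
  | 0 => fun k hk => by omega
  | i + 1 => (Bit_agree p i).step p

theorem Bit_agree' (p i d : ℕ) : Agree i (Bit p i) (Bit p (i + d)) := by
  induction d with
  | zero => intro k _; rfl
  | succ d ih =>
    intro k hk
    rw [ih k hk, Bit_agree p (i + d) k (by omega)]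
    rfl

theorem exB (p : ℕ) : ∃ B : PowerSeries ℕ, B = 1 + X ^ 2 * B ^ p := by
  let B : PowerSeries ℕ := PowerSeries.mk fun k => coeff k (Bit p (k + 1))
  have hB : ∀ i, Agree i B (Bit p i) := by
    intro i k hk
    simp only [B, coeff_mk]
    have := Bit_agree' p (k + 1) (i - (k + 1)) k (by omega)
    rwa [show k + 1 + (i - (k + 1)) = i by omega] at this
  refine ⟨B, ?_⟩
  ext k
  rw [hB (k + 1) k (by omega), (hB k).step p k (by omega)]
  rfl

theorem coefB {p : ℕ} (hp : 1 ≤ p) {B : PowerSeries ℕ} (hB : B = 1 + X ^ 2 * B ^ p) :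
    ∀ n r, (n * p + r) * coeff (2 * n) (B ^ r) = r * Nat.choose (n * p + r) n := by
  have h0 : constantCoeff B = 1 := by
    rw [hB]; simp
  intro n
  induction n with
  | zero => intro r; simp [h0]
  | succ n ihn =>
    intro r
    induction r with
    | zero => simp [coeff_one]
    | succ r ih =>
      have hs : B ^ (r + 1) = B ^ r + X ^ 2 * B ^ (r + p) := by
        rw [pow_succ]
        nth_rewrite 2 [hB]
        rw [pow_add]; ring
      have h1 := ihn (r + p)
      rw [hs, map_add, show 2 * (n + 1) = 2 * n + 2 by ring, coeff_X_pow_mul]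
      rw [show 2 * (n + 1) = 2 * n + 2 by ring] at ih
      rw [show n * p + (r + p) = (n + 1) * p + r by ring] at h1
      rw [← add_assoc]
      generalize hT : (n + 1) * p + r = T at *
      have hT0 : 0 < T := by rw [← hT]; positivity
      rw [Nat.choose_succ_succ]
      have hc := Nat.choose_succ_right_eq T n
      have hle : n ≤ T := by nlinarith
      generalize coeff (2 * n + 2) (B ^ r) = u at *
      generalize coeff (2 * n) (B ^ (r + p)) = v at *
      simp only [Nat.succ_eq_add_one]
      generalize T.choose (n + 1) = C1 at *
      generalize T.choose n = C0 at *
      zify [hle] at *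
      have hne : (T : ℤ) ≠ 0 := by omega
      apply mul_left_cancel₀ hne
      linear_combination (T + 1 : ℤ) * ih + (T + 1 : ℤ) * h1 - p * hc  + (C1 + C0) * hT
end ps

section
section core6
variable {α : Type*} [Fintype α] [DecidableEq α]

theorem three_c3 {σ : Perm α} (h : σ.IsThreeCycle) : ∃ x a b, x ≠ a ∧ x ≠ b ∧ a ≠ b ∧ σ = c3 x a b := by
  have hc := h.card_support
  have hn : σ.support.Nonempty := by rw [← Finset.card_pos]; omega
  obtain ⟨x, hx⟩ := hn
  have h3 : σ ^ 3 = 1 := by rw [← h.orderOf]; exact pow_orderOf_eq_one σ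
  have h3' : ∀ y, σ (σ (σ y)) = y := by
    intro y
    have := congrArg (fun p : Perm α => p y) h3
    simpa [pow_succ] using this
  have e1 : x ≠ σ x := (Perm.mem_support.1 hx).symm
  have e2 : σ x ≠ σ (σ x) := fun e => e1 (σ.injective e)
  have e3 : x ≠ σ (σ x) := fun e => by
    have := h3' x
    rw [← e] at this
    exact e1 this.symm
  refine ⟨x, σ x, σ (σ x), e1, e3, e2, ?_⟩
  have hs : ({x, σ x, σ (σ x)} : Finset α) = σ.support := by
    apply Finset.eq_of_subset_of_card_le
    · intro y hy
      simp only [Finset.mem_insert, Finset.mem_singleton] at hy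
      rcases hy with rfl | rfl | rfl
      · exact hx
      · simpa using hx
      · simpa using hx
    · rw [hc, Finset.card_eq_three.2 ⟨x, σ x, σ (σ x), e1, e3, e2, rfl⟩]
  ext y
  by_cases h1 : y = x
  · rw [h1, c3_x e1 e3]
  by_cases h2 : y = σ x
  · rw [h2, c3_a e3 e2]
  by_cases h4 : y = σ (σ x)
  · rw [h4, c3_b, h3']
  rw [c3_o h1 h2 h4]
  have : y ∉ σ.support := by rw [← hs]; simp [h1, h2, h4]
  simpa using this

theorem c3_three {x a b : α} (h1 : x ≠ a) (h2 : x ≠ b) (h3 : a ≠ b) : (c3 x a b).IsThreeCycle := by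
  rw [c3, swap_comm x a]
  exact isThreeCycle_swap_mul_swap_same h1.symm h3 h2

/-- the words -/
def Wd (k : ℕ) (u : Perm α) : Prop :=
  ∃ l : List (Perm α), (∀ t ∈ l, t.IsThreeCycle) ∧ l.prod = u ∧ l.length = k

theorem Wd_mul {k l : ℕ} {u v : Perm α} (h : Wd k u) (h' : Wd l v) : Wd (k + l) (u * v) := by
  obtain ⟨a, a1, a2, a3⟩ := h
  obtain ⟨b, b1, b2, b3⟩ := h'
  refine ⟨a ++ b, ?_, by simp [a2, b2], by simp [a3, b3]⟩
  intro t ht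
  rcases List.mem_append.1 ht with h | h
  · exact a1 t h
  · exact b1 t h

theorem Wd_inv {k : ℕ} {u : Perm α} (h : Wd k u) : Wd k u⁻¹ := by
  obtain ⟨a, a1, a2, a3⟩ := h
  refine ⟨(a.map (·⁻¹)).reverse, ?_, by rw [← List.prod_inv_reverse, a2], by simp [a3]⟩
  intro t ht
  simp only [List.mem_reverse, List.mem_map] at ht
  obtain ⟨s, hs, rfl⟩ := ht
  exact (a1 s hs).inv

theorem ell_one' : ell (1 : Perm α) = 0 := by
  have := ell_formPerm ([] : List α) (by simp)
  simpa using this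

theorem list_ell : ∀ (l : List (Perm α)), (∀ t ∈ l, t.IsThreeCycle) →
    ell l.prod ≤ 2 * l.length ∧ (ell l.prod = 2 * l.length → Od l.prod)
  | [], _ => by simp [ell_one', Od_one]
  | t :: l, h => by
    obtain ⟨i1, i2⟩ := list_ell l (fun s hs => h s (by simp [hs]))
    obtain ⟨x, a, b, h1, h2, h3, rfl⟩ := three_c3 (h t (by simp))
    have e := ell_mul_le (c3 x a b) l.prod
    have e' := ell_c3 h1 h2 h3
    rw [List.prod_cons, List.length_cons]
    refine ⟨by omega, fun he => merge h1 h2 h3 (i2 (by omega)) (by omega)⟩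

theorem Wd_ell {k : ℕ} {u : Perm α} (h : Wd k u) : ell u ≤ 2 * k := by
  obtain ⟨l, h1, rfl, rfl⟩ := h
  exact (list_ell l h1).1

theorem Wd_Od {k : ℕ} {u : Perm α} (h : Wd k u) (e : ell u = 2 * k) : Od u := by
  obtain ⟨l, h1, rfl, rfl⟩ := h
  exact (list_ell l h1).2 e

theorem Od_Wd : ∀ (n : ℕ) (u : Perm α), ell u = n → Od u → ∃ k, Wd k u ∧ ell u = 2 * k := by
  intro n
  induction n using Nat.strong_induction_on with
  | _ n IH =>
  intro u hu o
  by_cases h1 : u = 1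
  · subst h1
    exact ⟨0, ⟨[], by simp⟩, by simp [ell_one']⟩
  have : ∃ x, u x ≠ x := by
    by_contra hc
    push Not at hc
    exact h1 (Equiv.ext hc)
  obtain ⟨x, hx⟩ := this
  have hxa : x ≠ u x := fun e => hx e.symm
  have hab : u x ≠ u (u x) := fun e => hx (u.injective e.symm)
  have hxb : x ≠ u (u x) := (Od_sq_ne o hx).symm
  set a := u x with ha
  set b := u a with hb
  set τ := c3 x a b with hτ
  have vx : (τ⁻¹ * u) x = x := by
    rw [Perm.mul_apply, Perm.inv_eq_iff_eq, hτ, c3_x hxa hxb]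
  have va : (τ⁻¹ * u) a = a := by
    rw [Perm.mul_apply, Perm.inv_eq_iff_eq, hτ, c3_a hxb hab]
  have pe := peel_ell hxa hxb hab vx va
  have hu' : c3 x a b * (τ⁻¹ * u) = u := by rw [← hτ]; group
  have ov : Od (τ⁻¹ * u) := peel_rev hxa hxb hab vx va (by rw [hu']; exact o)
  rw [hu', ell_c3 hxa hxb hab] at pe
  obtain ⟨k, k1, k2⟩ := IH _ (by omega) (τ⁻¹ * u) rfl ov
  refine ⟨1 + k, ?_, by omega⟩
  rw [← hu']
  exact Wd_mul ⟨[c3 x a b], by simpa using c3_three hxa hxb hab, by simp, rfl⟩ k1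

theorem Od_mul {u v : Perm α} (h1 : Od u) (h2 : Od v) (h : ell u + ell v = ell (u * v)) : Od (u * v) := by
  obtain ⟨k, a, a'⟩ := Od_Wd _ u rfl h1
  obtain ⟨l, b, b'⟩ := Od_Wd _ v rfl h2
  exact Wd_Od (Wd_mul a b) (by omega)

theorem lenT_eq (u : Perm α) : lenT {σ : Perm α | σ.IsThreeCycle} u = sInf {k | Wd k u} := rfl

theorem lenT_Wd {k : ℕ} {u : Perm α} (h : Wd k u) : Wd (lenT {σ : Perm α | σ.IsThreeCycle} u) u := by
  rw [lenT_eq]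
  exact Nat.sInf_mem (s := {k | Wd k u}) ⟨k, h⟩

theorem lenT_Od {u : Perm α} (h : Od u) : 2 * lenT {σ : Perm α | σ.IsThreeCycle} u = ell u := by
  obtain ⟨k, a, a'⟩ := Od_Wd _ u rfl h
  have h1 : lenT {σ : Perm α | σ.IsThreeCycle} u ≤ k := Nat.sInf_le a
  have h2 := Wd_ell (lenT_Wd a)
  omega

theorem ell_eq_zero {u : Perm α} (h : ell u = 0) : u = 1 := by
  apply eq_one_of_Fx
  apply Submodule.eq_top_of_finrank_eq
  have := ell_add u
  rw [Module.finrank_fintype_fun_eq_card]; omega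

/-- the relation -/
def RR (y z : Perm α) : Prop := le2 y z ∧ Od y ∧ Od (y⁻¹ * z)

theorem leT_iff {y w : Perm α} (o : Od w) (h : (∃ k, Wd k y) ∨ w ≠ 1) :
    leT {σ : Perm α | σ.IsThreeCycle} y w ↔ RR y w := by
  unfold leT RR le2
  constructor
  · intro e
    have hw := lenT_Od o
    by_cases hy : ∃ k, Wd k y
    · obtain ⟨k, hk⟩ := hy
      obtain ⟨l, hl, -⟩ := Od_Wd _ w rfl o
      have w1 := lenT_Wd hk
      have w2 := lenT_Wd (Wd_mul (Wd_inv hk) hl)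
      have e1 := Wd_ell w1
      have e2 := Wd_ell w2
      have e3 := ell_mul_le y (y⁻¹ * w)
      rw [mul_inv_cancel_left] at e3
      exact ⟨by omega, Wd_Od w1 (by omega), Wd_Od w2 (by omega)⟩
    · exfalso
      have hy' : ¬ ∃ k, Wd k (y⁻¹ * w) := by
        rintro ⟨k, hk⟩
        obtain ⟨l, hl, -⟩ := Od_Wd _ w rfl o
        have := Wd_mul hl (Wd_inv hk)
        rw [mul_inv_rev, inv_inv, mul_inv_cancel_left] at this
        exact hy ⟨_, this⟩
      have z1 : lenT {σ : Perm α | σ.IsThreeCycle} y = 0 := by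
        rw [lenT_eq, Nat.sInf_eq_zero]; right
        exact Set.eq_empty_of_forall_notMem fun k hk => hy ⟨k, hk⟩
      have z2 : lenT {σ : Perm α | σ.IsThreeCycle} (y⁻¹ * w) = 0 := by
        rw [lenT_eq, Nat.sInf_eq_zero]; right
        exact Set.eq_empty_of_forall_notMem fun k hk => hy' ⟨k, hk⟩
      rcases h with h | h
      · exact hy h
      · exact h (ell_eq_zero (by omega))
  · rintro ⟨h1, h2, h3⟩
    have := lenT_Od o
    have := lenT_Od h2
    have := lenT_Od h3
    omega

theorem RR_trans {x y z : Perm α} (h : RR x y) (h' : RR y z) : RR x z := by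
  obtain ⟨a1, a2, a3⟩ := h
  obtain ⟨b1, b2, b3⟩ := h'
  unfold le2 at a1 b1
  have e : x⁻¹ * y * (y⁻¹ * z) = x⁻¹ * z := by group
  have h1 := ell_mul_le (x⁻¹ * y) (y⁻¹ * z)
  have h2 := ell_mul_le x (x⁻¹ * z)
  rw [mul_inv_cancel_left] at h2
  rw [e] at h1
  refine ⟨?_, a2, ?_⟩
  · unfold le2; omega
  · rw [← e]
    refine Od_mul a3 b3 ?_
    rw [e]; omega

theorem RR_refl {x : Perm α} (h : Od x) : RR x x := by
  refine ⟨?_, h, ?_⟩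
  · simp [le2, ell_one']
  · simp [Od_one]

/-- chains -/
def Ch (m : ℕ) (w : Perm α) (c : Fin m → Perm α) : Prop :=
  (∀ i j, i ≤ j → RR (c i) (c j)) ∧ ∀ i, RR (c i) w

theorem ff_Od (L : List (Finset α)) : ∀ {w : Perm α}, ff L w ≠ 0 → Od w := by
  induction L with
  | nil =>
    intro w h
    simp only [ff] at h
    have : w = 1 := by by_contra hc; simp [hc] at h
    rw [this]; exact Od_one
  | cons A L ih =>
    intro w h
    rw [ff_cons] at h
    obtain ⟨u, hu, hh⟩ := Finset.exists_ne_zero_of_sum_ne_zero h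
    obtain ⟨o, -, hl⟩ := mem_good.1 hu
    have := Od_mul o (ih hh) (by rw [mul_inv_cancel_left]; exact hl)
    rwa [mul_inv_cancel_left] at this

open Classical in
theorem Ch_card : ∀ (m : ℕ) (w : Perm α), Od w →
    (Finset.univ.filter (Ch m w)).card = ff (List.replicate (m + 1) ∅) w := by
  intro m
  induction m with
  | zero =>
    intro w o
    have : Finset.univ.filter (Ch 0 w) = Finset.univ := by
      rw [Finset.filter_eq_self]
      intro c _
      exact ⟨fun i => i.elim0, fun i => i.elim0⟩
    rw [this]
    simp only [zero_add, List.replicate_one, ff_cons, ff]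
    rw [Finset.sum_eq_single w]
    · simp
    · intro u _ hu
      rw [if_neg]
      intro e; exact hu (inv_mul_eq_one.1 e)
    · intro h
      exfalso; apply h
      rw [mem_good]
      exact ⟨o, by simp, (RR_refl o).1⟩
  | succ m ih =>
    intro w o
    have h1 : (Finset.univ.filter (Ch (m + 1) w)).card = ∑ y ∈ Finset.univ.filter (fun y => RR y w),
        (Finset.univ.filter (Ch m y)).card := by
      rw [Finset.card_eq_sum_card_fiberwise (f := fun c => c (Fin.last m))
        (t := Finset.univ.filter (fun y => RR y w))]
      · refine Finset.sum_congr rfl fun y hy => ?_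
        have hy : RR y w := by simpa using hy
        refine Finset.card_nbij' (fun c => fun i => c i.castSucc)
          (fun c => Fin.snoc (α := fun _ => Perm α) c y) ?_ ?_ ?_ ?_
        · intro c hc
          simp only [Finset.coe_filter, Finset.mem_filter, Finset.mem_univ, true_and, Set.mem_ofPred_eq] at hc ⊢
          obtain ⟨⟨c1, c2⟩, rfl⟩ := hc
          exact ⟨fun i j hij => c1 _ _ (by simpa using hij), fun i => c1 _ _ (Fin.le_last _)⟩
        · intro c hc
          simp only [Finset.coe_filter, Finset.mem_filter, Finset.mem_univ, true_and, Set.mem_ofPred_eq] at hc ⊢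
          obtain ⟨c1, c2⟩ := hc
          refine ⟨⟨?_, ?_⟩, by simp⟩
          · intro i j
            induction i using Fin.lastCases with
            | last =>
              intro hij
              have : j = Fin.last m := le_antisymm (Fin.le_last _) hij
              subst this
              simp only [Fin.snoc_last]
              exact RR_refl hy.2.1
            | cast i =>
              induction j using Fin.lastCases with
              | last => intro _; simp only [Fin.snoc_last, Fin.snoc_castSucc]; exact c2 i
              | cast j =>
                intro hij
                simp only [Fin.snoc_castSucc]; exact c1 i j (by simpa using hij)
          · intro i
            induction i using Fin.lastCases with
            | last => simp only [Fin.snoc_last]; exact hy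
            | cast i => simp only [Fin.snoc_castSucc]; exact RR_trans (c2 i) hy
        · intro c hc
          simp only [Finset.coe_filter, Finset.mem_filter, Finset.mem_univ, true_and, Set.mem_ofPred_eq] at hc
          rw [← hc.2]
          exact Fin.snoc_init_self c
        · intro c hc
          funext i
          simp
      · intro c hc
        simp only [Finset.coe_filter, Finset.mem_univ, true_and, Set.mem_ofPred_eq] at hc ⊢
        exact hc.2 _
    rw [h1, List.replicate_succ, ff_cons,
      ← Finset.sum_filter_of_ne (p := fun u => Od (u⁻¹ * w)) (fun u _ h => ff_Od _ h)]
    refine Finset.sum_bij' (fun y _ => w * y⁻¹) (fun u _ => u⁻¹ * w) ?_ ?_ ?_ ?_ ?_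
    · intro y hy
      have hy : RR y w := by simpa using hy
      obtain ⟨a1, a2, a3⟩ := hy
      have e : y * (y⁻¹ * w) * y⁻¹ = w * y⁻¹ := by group
      have e1 := ell_conj y (y⁻¹ * w)
      have e2 := Od_conj (u := y) a3
      rw [e] at e1 e2
      have e3 : (w * y⁻¹)⁻¹ * w = y := by group
      rw [Finset.mem_filter, mem_good, e3]
      refine ⟨⟨e2, by simp, ?_⟩, a2⟩
      unfold le2 at a1 ⊢
      rw [e3]; omega
    · intro u hu
      rw [Finset.mem_filter, mem_good] at hu
      obtain ⟨⟨a1, -, a2⟩, a3⟩ := hu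
      have e : (u⁻¹ * w)⁻¹ * u * ((u⁻¹ * w)⁻¹)⁻¹ = (u⁻¹ * w)⁻¹ * w := by group
      have e1 := ell_conj (u⁻¹ * w)⁻¹ u
      have e2 := Od_conj (u := (u⁻¹ * w)⁻¹) a1
      rw [e] at e1 e2
      simp only [Finset.mem_filter, Finset.mem_univ, true_and]
      refine ⟨?_, a3, e2⟩
      unfold le2 at a2 ⊢
      omega
    · intro y _; group
    · intro u _; group
    · intro y hy
      have hy : RR y w := by simpa using hy
      rw [ih y hy.2.1]
      congr 1; group
end core6

theorem rot_form (N : ℕ) : finRotate (N + 1) = (List.finRange (N + 1)).formPerm := by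
  ext i
  have h := List.formPerm_apply_getElem (List.finRange (N + 1)) (List.nodup_finRange _) i (by simp; omega)
  simp only [List.getElem_finRange] at h
  simp at h
  rw [h]
  simp [Fin.val_add]

theorem rot_cons (N : ℕ) : ∃ t : List (Fin (N + 1)), t.length = N ∧ (0 :: t).Nodup ∧
    finRotate (N + 1) = (0 :: t).formPerm := by
  refine ⟨(List.finRange N).map Fin.succ, by simp, ?_, ?_⟩
  · rw [← List.finRange_succ]; exact List.nodup_finRange _
  · rw [← List.finRange_succ]; exact rot_form N

theorem rot_Od (n : ℕ) : Od (finRotate (2 * n + 1)) := by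
  intro y
  refine ⟨n, ?_⟩
  have := List.formPerm_pow_length_eq_one_of_nodup _ (List.nodup_finRange (2 * n + 1))
  rw [← rot_form, List.length_finRange] at this
  rw [this]; rfl

theorem rot_ne {n : ℕ} (h : n ≠ 0) : finRotate (2 * n + 1) ≠ 1 := by
  obtain ⟨t, h1, h2, h3⟩ := rot_cons (2 * n)
  intro e
  have := ell_formPerm _ h2
  rw [← h3, e, ell_one', List.length_cons, h1] at this
  omega

end

/-- Theorem: the zeta polynomial of `[e,c]₃ ⊆ (A_{2n+1}, ≤₃)`, stated as: for every
positive integer `q = m+1`, the number of `(q-1)`-multichains in `[e,c]₃` equals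
`q/(q(2n+1)-n) · C(q(2n+1)-n, n)`. -/
theorem stmt15 (n m : ℕ) :
    (Nat.card {c : Fin m → Perm (Fin (2*n+1)) //
        (∀ i j, i ≤ j → leT (threeCycles (2*n+1)) (c i) (c j)) ∧
        ∀ i, leT (threeCycles (2*n+1)) (c i) (finRotate (2*n+1))} : ℚ)
      = ((m+1 : ℚ) / ((m+1)*(2*n+1) - n)) *
          (Nat.choose ((m+1)*(2*n+1) - n) n : ℚ) := by
  classical
  have hiff : ∀ c : Fin m → Perm (Fin (2*n+1)), ((∀ i j, i ≤ j → leT (threeCycles (2*n+1)) (c i) (c j)) ∧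
        ∀ i, leT (threeCycles (2*n+1)) (c i) (finRotate (2*n+1))) ↔ Ch m (finRotate (2*n+1)) c := by
    intro c
    have key : ∀ y, leT (threeCycles (2*n+1)) y (finRotate (2*n+1)) ↔ RR y (finRotate (2*n+1)) := by
      intro y
      apply leT_iff (rot_Od n)
      by_cases hn : n = 0
      · subst hn
        left
        exact ⟨0, [], by simp, Equiv.ext fun i => (by decide : ∀ i j : Fin (2 * 0 + 1), i = j) _ _, rfl⟩
      · exact Or.inr (rot_ne hn)
    have key2 : ∀ y z : Perm (Fin (2*n+1)), Od y → Od z → (leT (threeCycles (2*n+1)) y z ↔ RR y z) := by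
      intro y z hy hz
      apply leT_iff hz
      obtain ⟨k, hk, -⟩ := Od_Wd _ y rfl hy
      exact Or.inl ⟨k, hk⟩
    unfold Ch
    simp only [key]
    constructor
    · rintro ⟨h1, h2⟩
      exact ⟨fun i j hij => (key2 _ _ (h2 i).2.1 (h2 j).2.1).1 (h1 i j hij), h2⟩
    · rintro ⟨h1, h2⟩
      exact ⟨fun i j hij => (key2 _ _ (h2 i).2.1 (h2 j).2.1).2 (h1 i j hij), h2⟩
  have hcard : Nat.card {c : Fin m → Perm (Fin (2*n+1)) //
        (∀ i j, i ≤ j → leT (threeCycles (2*n+1)) (c i) (c j)) ∧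
        ∀ i, leT (threeCycles (2*n+1)) (c i) (finRotate (2*n+1))} =
        ff (List.replicate (m + 1) ∅) (finRotate (2*n+1)) := by
    rw [← Ch_card m _ (rot_Od n), Nat.card_congr (Equiv.subtypeEquivRight hiff), Nat.card_eq_fintype_card,
      Fintype.card_subtype]
  rw [hcard]
  obtain ⟨t, h1, h2, h3⟩ := rot_cons (2 * n)
  obtain ⟨B, hB⟩ := exB (2 * (m + 1) - 1)
  rw [h3, ff_val (m + 1) B hB (2 * n) 0 t h1 h2 _ (by simp) (by simp), List.count_replicate_self]
  have hc := coefB (by omega) hB n (m + 1)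
  have e : n * (2 * (m + 1) - 1) + (m + 1) + n = (m + 1) * (2 * n + 1) := by
    rw [show 2 * (m + 1) - 1 = 2 * m + 1 by omega]; ring
  have e' : n * (2 * (m + 1) - 1) + (m + 1) = (m + 1) * (2 * n + 1) - n := by omega
  have e2 : (((m + 1) * (2 * n + 1) - n : ℕ) : ℚ) = (m + 1) * (2 * n + 1) - n := by
    rw [Nat.cast_sub (by omega)]; push_cast; ring
  have pos : 0 < (m + 1) * (2 * n + 1) - n := by omega
  rw [e'] at hc
  have hc' : ((((m + 1) * (2 * n + 1) - n : ℕ) : ℚ)) * (PowerSeries.coeff (2 * n) (B ^ (m + 1)) : ℕ) =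
      (m + 1) * (((m + 1) * (2 * n + 1) - n).choose n : ℕ) := by exact_mod_cast hc
  have pos' : (((m + 1) * (2 * n + 1) - n : ℕ) : ℚ) ≠ 0 := by exact_mod_cast pos.ne'
  rw [← e2, div_mul_eq_mul_div, eq_div_iff pos', ← hc', mul_comm]
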